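/- arXiv:2108.07307 — 3 statements merged into one kernel-verified Lean document; each statement's English description precedes it below -/
import Mathlib

section
/- Let X ⊆ ℝ × ℝ, let p be ⪯-maximal in X, and let q be ⪯-maximal in the slice {x ∈ X | x.2 < p.2}. If q.1 > p.1, then q is ⪯-maximal in X. (Correctness of exploring the region R₃ of a Pareto-optimal point (c, e): a point Pareto-optimal among those with strictly smaller explainability and with strictly larger correctness than c is Pareto-optimal in the whole space.) -/
/-- `p` is `⪯`-maximal (Pareto-optimal) in `X ⊆ ℝ × ℝ`, where `⪯` is the
componentwise product order on `ℝ × ℝ`. -/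
def ParetoMax (X : Set (ℝ × ℝ)) (p : ℝ × ℝ) : Prop :=
  p ∈ X ∧ ∀ q ∈ X, q ≠ p → ¬ p ≤ q

theorem region_R3_exploration_sound
    (X : Set (ℝ × ℝ)) (p q : ℝ × ℝ)
    (hp : ParetoMax X p)
    (hq : ParetoMax {x ∈ X | x.2 < p.2} q)
    (hc : q.1 > p.1) :
    ParetoMax X q := by
  refine ⟨hq.1.1, fun r hr hne hle => ?_⟩
  by_cases h : r.2 < p.2
  · exact hq.2 r ⟨hr, h⟩ hne hle
  · have h1 : p.1 < r.1 := lt_of_lt_of_le hc hle.1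
    refine hp.2 r hr ?_ ⟨h1.le, not_lt.mp h⟩
    intro he
    rw [he] at h1
    exact lt_irrefl _ h1
end

section
/- Let Z be a measurable space, μ a probability measure on Z, H a finite type, and for each h : H let E h ⊆ Z be a measurable set (the set of inputs on which hypothesis h errs), with true error err h = μ(E h). For every ε ∈ (0,1) and every m : ℕ, the m-fold product measure μ^⊗m (on functions Fin m → Z) of the misleading-sample event {s | ∃ h : H, err h > ε and s i ∉ E h for all i} is at most (card H)·(1−ε)^m. (Union bound underlying the realizable-case sample complexity of finite interpretation classes.) -/
open MeasureTheory

theorem misleading_sample_union_bound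
    {Z : Type*} [MeasurableSpace Z] (μ : Measure Z) [IsProbabilityMeasure μ]
    {H : Type*} [Fintype H]
    (E : H → Set Z) (hE : ∀ h, MeasurableSet (E h))
    (ε : ℝ) (hε0 : 0 < ε) (hε1 : ε < 1) (m : ℕ) :
    (Measure.pi (fun _ : Fin m => μ))
        {s : Fin m → Z | ∃ h : H,
          ENNReal.ofReal ε < μ (E h) ∧ ∀ i : Fin m, s i ∉ E h}
      ≤ (Fintype.card H : ENNReal) * ENNReal.ofReal ((1 - ε) ^ m) := by
  rw [Set.setOf_exists]
  refine (measure_iUnion_fintype_le _ _).trans ?_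
  have key : ∀ h : H, (Measure.pi (fun _ : Fin m => μ))
      {s : Fin m → Z | ENNReal.ofReal ε < μ (E h) ∧ ∀ i : Fin m, s i ∉ E h}
      ≤ ENNReal.ofReal ((1 - ε) ^ m) := by
    intro h
    by_cases hh : ENNReal.ofReal ε < μ (E h)
    · have hset : {s : Fin m → Z | ENNReal.ofReal ε < μ (E h) ∧ ∀ i : Fin m, s i ∉ E h}
          = Set.univ.pi (fun _ : Fin m => (E h)ᶜ) := by
        ext s
        simp [hh]
      rw [hset, Measure.pi_pi, Finset.prod_const, Finset.card_univ, Fintype.card_fin,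
        ENNReal.ofReal_pow (by linarith), prob_compl_eq_one_sub (hE h),
        ENNReal.ofReal_sub _ hε0.le, ENNReal.ofReal_one]
      gcongr
    · simp [hh]
  refine (Finset.sum_le_sum (fun h _ => key h)).trans ?_
  simp
end

section
/- Let Z be a measurable space, μ a probability measure on Z, H a finite nonempty type with n = card H, and for each h : H let E h ⊆ Z be a measurable set with true error err h = μ(E h). Let ε, δ ∈ (0,1) and let m : ℕ satisfy m ≥ log(n/δ)/ε (natural logarithm). Then the m-fold product measure μ^⊗m of the event {s : Fin m → Z | ∃ h : H, err h > ε and s i ∉ E h for all i} is at most δ. Equivalently, with probability at least 1−δ over m i.i.d. samples, every hypothesis consistent with the sample has true error at most ε. (The paper's realizable sample-complexity bound m_E(ε, δ) ≤ ⌈log(|E|/δ)/ε⌉ for a finite class of interpretations.) -/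
open MeasureTheory

theorem realizable_sample_complexity
    {Z : Type*} [MeasurableSpace Z] (μ : Measure Z) [IsProbabilityMeasure μ]
    {H : Type*} [Fintype H] [Nonempty H]
    (E : H → Set Z) (hE : ∀ h, MeasurableSet (E h))
    (ε δ : ℝ) (hε0 : 0 < ε) (hε1 : ε < 1) (hδ0 : 0 < δ) (hδ1 : δ < 1)
    (m : ℕ) (hm : (m : ℝ) ≥ Real.log ((Fintype.card H : ℝ) / δ) / ε) :
    (Measure.pi (fun _ : Fin m => μ))
        {s : Fin m → Z | ∃ h : H,
          ENNReal.ofReal ε < μ (E h) ∧ ∀ i : Fin m, s i ∉ E h}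
      ≤ ENNReal.ofReal δ := by
  have hn : (0 : ℝ) < (Fintype.card H : ℝ) := by exact_mod_cast Fintype.card_pos
  have key : (1 - ε) ^ m ≤ δ / (Fintype.card H : ℝ) := by
    have h1 : (1 - ε) ^ m ≤ Real.exp (-ε) ^ m :=
      pow_le_pow_left₀ (by linarith) (Real.one_sub_le_exp_neg ε) m
    have h2 : Real.log ((Fintype.card H : ℝ) / δ) ≤ m * ε := (div_le_iff₀ hε0).1 hm
    have h3 : δ / (Fintype.card H : ℝ) = Real.exp (-Real.log ((Fintype.card H : ℝ) / δ)) := by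
      rw [Real.exp_neg, Real.exp_log (by positivity), inv_div]
    rw [h3]
    refine h1.trans ?_
    rw [← Real.exp_nat_mul]
    exact Real.exp_le_exp.2 (by linarith)
  have hone : ∀ h : H, (Measure.pi (fun _ : Fin m => μ))
      {s : Fin m → Z | ENNReal.ofReal ε < μ (E h) ∧ ∀ i : Fin m, s i ∉ E h}
      ≤ ENNReal.ofReal (δ / (Fintype.card H : ℝ)) := by
    intro h
    by_cases hh : ENNReal.ofReal ε < μ (E h)
    · have hset : {s : Fin m → Z | ENNReal.ofReal ε < μ (E h) ∧ ∀ i : Fin m, s i ∉ E h}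
          = Set.pi Set.univ (fun _ : Fin m => (E h)ᶜ) := by
        ext s
        simp [hh, Set.mem_pi]
      rw [hset, Measure.pi_pi, Finset.prod_const, Finset.card_univ, Fintype.card_fin,
        prob_compl_eq_one_sub (hE h)]
      calc (1 - μ (E h)) ^ m ≤ (ENNReal.ofReal (1 - ε)) ^ m := by
            gcongr
            rw [ENNReal.ofReal_sub _ hε0.le, ENNReal.ofReal_one]
            exact tsub_le_tsub_left hh.le 1
        _ = ENNReal.ofReal ((1 - ε) ^ m) := (ENNReal.ofReal_pow (by linarith) m).symm
        _ ≤ _ := ENNReal.ofReal_le_ofReal key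
    · simp [hh]
  rw [Set.setOf_exists]
  refine (measure_iUnion_fintype_le _ _).trans ((Finset.sum_le_sum fun h _ => hone h).trans ?_)
  rw [Finset.sum_const, Finset.card_univ, nsmul_eq_mul, ← ENNReal.ofReal_natCast,
    ← ENNReal.ofReal_mul hn.le, mul_div_cancel₀ _ hn.ne']
end
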